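/- For every real (2n)×(2n) matrix X and every n-tuple of real (2n)×(2n) matrices A₁, …, Aₙ, one has Σ_{i=1}^{n} F(A₁, …, A_{i−1}, X·A_i + A_i·Xᵀ, A_{i+1}, …, Aₙ) = tr(X) · F(A₁, …, Aₙ); in particular this sum vanishes whenever X is trace-free (for example when X is antisymmetric, as for an so-valued connection form). This is the infinitesimal invariance property of the polynomial f used throughout the paper. -/

import Mathlib

/-- The multilinear ε-contraction polynomial on `n`-tuples of real `(2n)×(2n)` matrices:
`F(A₁, …, Aₙ) = Σ_{σ ∈ S_{2n}} sgn(σ) · ∏_{i=1}^{n} (A_i)_{σ(2i−1), σ(2i)}`. -/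
noncomputable def epsContract (n : ℕ) (A : Fin n → Matrix (Fin (2 * n)) (Fin (2 * n)) ℝ) : ℝ :=
  ∑ σ : Equiv.Perm (Fin (2 * n)),
    ((Equiv.Perm.sign σ : ℤ) : ℝ) *
      ∏ i : Fin n,
        A i (σ ⟨2 * (i : ℕ), by have := i.isLt; omega⟩)
            (σ ⟨2 * (i : ℕ) + 1, by have := i.isLt; omega⟩)

/-!
Replacing `A_i` by `X * A_i + A_i * Xᵀ` for each `i` in turn amounts to letting `X` act on each of
the `2n` indices of `A₁ ⊗ ⋯ ⊗ Aₙ` in turn. Under antisymmetrization, letting `X` act on the index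
equal to `q` produces the terms `X q k` in which `q` is replaced by `k`. For `k ≠ q` the value `k`
then occurs twice, so the antisymmetrized sum vanishes; the terms `k = q` add up to the trace.
-/

open Equiv Finset Function Matrix

section Antisymmetrization

variable {ι R N : Type*} [Fintype ι] [DecidableEq ι] [AddCommGroup N]

theorem sum_sign_smul_comp_eq_zero_of_eq {β : Type*} (G : (ι → β) → N) {v : ι → β} {i j : ι}
    (hv : v i = v j) (hij : i ≠ j) : ∑ σ : Perm ι, Perm.sign σ • G (v ∘ σ) = 0 := by
  have comp_swap (σ : Perm ι) : v ∘ (swap i j * σ : Perm ι) = v ∘ σ := by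
    rw [Perm.coe_mul, ← comp_assoc, comp_swap_eq_update, hv, update_eq_self, ← hv, update_eq_self]
  refine sum_involution (fun σ _ => swap i j * σ) (fun σ _ => ?_)
    (fun σ _ _ => (not_congr swap_mul_eq_iff).mpr hij) (fun _ _ => mem_univ _)
    (fun σ _ => swap_mul_involutive i j σ)
  rw [comp_swap, Perm.sign_mul, Perm.sign_swap hij, neg_one_mul, Units.neg_smul, add_neg_cancel]

theorem sum_sign_smul_sum_update [Semiring R] [Module R N] (X : Matrix ι ι R) (G : (ι → ι) → N) :
    ∑ σ : Perm ι, Perm.sign σ • ∑ p, ∑ k, X (σ p) k • G (update σ p k) =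
      X.trace • ∑ σ : Perm ι, Perm.sign σ • G σ := by
  have reindex (σ : Perm ι) : ∑ p, ∑ k, X (σ p) k • G (update σ p k) =
      ∑ q, ∑ k, X q k • G (update id q k ∘ σ) := by
    simpa only [update_comp_eq_of_injective _ σ.injective, id_comp] using
      Equiv.sum_comp σ fun q => ∑ k, X q k • G (update id q k ∘ σ)
  have off_diagonal (q k : ι) (hkq : k ≠ q) :
      ∑ σ : Perm ι, Perm.sign σ • G (update id q k ∘ σ) = 0 :=
    sum_sign_smul_comp_eq_zero_of_eq G (i := q) (j := k) (by simp [hkq]) hkq.symm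
  have diagonal (q : ι) : update id q q = id := update_eq_self q id
  calc ∑ σ : Perm ι, Perm.sign σ • ∑ p, ∑ k, X (σ p) k • G (update σ p k)
      = ∑ q, ∑ k, X q k • ∑ σ : Perm ι, Perm.sign σ • G (update id q k ∘ σ) := by
        simp only [reindex, smul_sum, smul_comm (X _ _)]
        rw [sum_comm]
        exact sum_congr rfl fun q _ => sum_comm
    _ = ∑ q, X q q • ∑ σ : Perm ι, Perm.sign σ • G σ := by
        refine sum_congr rfl fun q _ => ?_
        rw [Fintype.sum_eq_single q fun k hkq => by rw [off_diagonal q k hkq, smul_zero]]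
        simp only [diagonal, id_comp]
    _ = X.trace • ∑ σ : Perm ι, Perm.sign σ • G σ := sum_smul.symm

end Antisymmetrization

section PairedEntries

variable {κ ι R : Type*} [Fintype κ] [CommSemiring R]

/-- The component at the multi-index `f` of the tensor product of the matrices `A i`, the two
indices of `A i` occupying the slots `e (i, 0)` and `e (i, 1)`. -/
def pairedEntryProd (e : κ × Fin 2 ≃ ι) (A : κ → Matrix ι ι R) (f : ι → ι) : R :=
  ∏ i, A i (f (e (i, 0))) (f (e (i, 1)))

variable [DecidableEq κ] (e : κ × Fin 2 ≃ ι) (A : κ → Matrix ι ι R) (i : κ)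

theorem pairedEntryProd_update (B : Matrix ι ι R) (f : ι → ι) :
    pairedEntryProd e (update A i B) f =
      B (f (e (i, 0))) (f (e (i, 1))) * ∏ j ∈ {i}ᶜ, A j (f (e (j, 0))) (f (e (j, 1))) := by
  rw [pairedEntryProd, Fintype.prod_eq_mul_prod_compl i, update_self]
  congr 1
  refine prod_congr rfl fun j hj => ?_
  rw [update_of_ne (by simpa using hj)]

variable [DecidableEq ι]

theorem pairedEntryProd_update_index (s : Fin 2) (f : ι → ι) (k : ι) :
    pairedEntryProd e A (update f (e (i, s)) k) =
      A i (update f (e (i, s)) k (e (i, 0))) (update f (e (i, s)) k (e (i, 1))) *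
        ∏ j ∈ {i}ᶜ, A j (f (e (j, 0))) (f (e (j, 1))) := by
  rw [pairedEntryProd, Fintype.prod_eq_mul_prod_compl i]
  congr 1
  refine prod_congr rfl fun j hj => ?_
  have hji : j ≠ i := by simpa using hj
  rw [update_of_ne (by simp [hji]), update_of_ne (by simp [hji])]

variable [Fintype ι] (X : Matrix ι ι R)

theorem pairedEntryProd_update_mul_add_mul_transpose (f : ι → ι) :
    pairedEntryProd e (update A i (X * A i + A i * Xᵀ)) f =
      ∑ s, ∑ k, X (f (e (i, s))) k * pairedEntryProd e A (update f (e (i, s)) k) := by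
  have first_index : pairedEntryProd e (update A i (X * A i)) f =
      ∑ k, X (f (e (i, 0))) k * pairedEntryProd e A (update f (e (i, 0)) k) := by
    simp [pairedEntryProd_update, pairedEntryProd_update_index, mul_apply, sum_mul, mul_assoc]
  have second_index : pairedEntryProd e (update A i (A i * Xᵀ)) f =
      ∑ k, X (f (e (i, 1))) k * pairedEntryProd e A (update f (e (i, 1)) k) := by
    simp [pairedEntryProd_update, pairedEntryProd_update_index, mul_apply, sum_mul,
      mul_left_comm, mul_assoc]
  rw [Fin.sum_univ_two, ← first_index, ← second_index]
  simp only [pairedEntryProd_update, Matrix.add_apply, add_mul]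

theorem sum_pairedEntryProd_update_mul_add_mul_transpose (f : ι → ι) :
    ∑ i, pairedEntryProd e (update A i (X * A i + A i * Xᵀ)) f =
      ∑ p, ∑ k, X (f p) k * pairedEntryProd e A (update f p k) := by
  simp only [pairedEntryProd_update_mul_add_mul_transpose]
  rw [← e.sum_comp, Fintype.sum_prod_type]

end PairedEntries

section PairedEpsContract

variable {κ ι R : Type*} [Fintype κ] [Fintype ι] [DecidableEq ι] [CommRing R]

/-- The ε-contraction of the tensor product of the matrices `A i`, over an arbitrary commutative
ring and with the slots grouped in pairs by `e`. On antisymmetric matrices it is the polarized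
Pfaffian up to a constant factor. -/
def pairedEpsContract (e : κ × Fin 2 ≃ ι) (A : κ → Matrix ι ι R) : R :=
  ∑ σ : Perm ι, Perm.sign σ • pairedEntryProd e A σ

theorem epsContract_infinitesimal_invariance_general [DecidableEq κ] (e : κ × Fin 2 ≃ ι)
    (A : κ → Matrix ι ι R) (X : Matrix ι ι R) :
    ∑ i, pairedEpsContract e (update A i (X * A i + A i * Xᵀ)) =
      X.trace * pairedEpsContract e A := by
  simp only [pairedEpsContract]
  rw [sum_comm]
  simp only [← smul_sum, sum_pairedEntryProd_update_mul_add_mul_transpose]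
  exact sum_sign_smul_sum_update X (pairedEntryProd e A)

end PairedEpsContract

/-- The grouping of the slots `0, …, 2n - 1` into the consecutive pairs `(2i, 2i + 1)`. -/
def consecutivePairs (n : ℕ) : Fin n × Fin 2 ≃ Fin (2 * n) :=
  finProdFinEquiv.trans (finCongr (Nat.mul_comm n 2))

theorem epsContract_eq_pairedEpsContract (n : ℕ)
    (A : Fin n → Matrix (Fin (2 * n)) (Fin (2 * n)) ℝ) :
    epsContract n A = pairedEpsContract (consecutivePairs n) A := by
  simp [epsContract, pairedEpsContract, pairedEntryProd, consecutivePairs, finProdFinEquiv,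
    Units.smul_def, add_comm 1]

/-- Infinitesimal invariance of the ε-contraction polynomial: for every real `(2n)×(2n)`
matrix `X` and every `n`-tuple of real `(2n)×(2n)` matrices `A₁, …, Aₙ`,
`Σ_{i=1}^{n} F(A₁, …, X·A_i + A_i·Xᵀ, …, Aₙ) = tr(X) · F(A₁, …, Aₙ)`;
in particular the sum vanishes whenever `X` is trace-free. -/
theorem epsContract_infinitesimal_invariance (n : ℕ) (hn : 1 ≤ n)
    (X : Matrix (Fin (2 * n)) (Fin (2 * n)) ℝ)
    (A : Fin n → Matrix (Fin (2 * n)) (Fin (2 * n)) ℝ) :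
    (∑ i : Fin n,
        epsContract n (Function.update A i (X * A i + A i * X.transpose))
      = X.trace * epsContract n A)
    ∧ (X.trace = 0 →
        ∑ i : Fin n,
          epsContract n (Function.update A i (X * A i + A i * X.transpose)) = 0) := by
  simp only [epsContract_eq_pairedEpsContract, epsContract_infinitesimal_invariance_general,
    true_and]
  exact fun hX => mul_eq_zero_of_left hX _
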